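/- Let T be a locally finite tree in which every vertex has degree at least p for some integer p ≥ 3, and let v be a vertex. Then |S_n(v)| ≥ (p − 2)·|B_{n−1}(v)| for all n ≥ 1. -/

import Mathlib

/-!
Since a tree is acyclic, neighbours of `x` lie at distance `d(v,x) ± 1` from `v`, and at most one
of them (the parent) is closer to `v`. Hence every vertex of `S_n(v)` has at least `p - 1`
neighbours in `S_{n+1}(v)` (`pred_le_card_children`), while a vertex of `S_{n+1}(v)` has only one
neighbour in `S_n(v)` (`parent_unique`); double counting the edges between the two spheres gives
`(p - 1)|S_n| ≤ |S_{n+1}|` (`mul_sphere_le`). The theorem follows by induction: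
`(p - 2)|B_n| = (p - 2)|B_{n-1}| + (p - 2)|S_n| ≤ |S_n| + (p - 2)|S_n| = (p - 1)|S_n| ≤ |S_{n+1}|`.
-/

namespace TreeGrowth

variable {V : Type*} {G : SimpleGraph V}

/-- Geodesics from `v` to `x` and to `y`, extended by an edge to `w`, are again geodesics; they are
paths, so they coincide in a tree, and with them their penultimate vertices. -/
lemma parent_unique (hT : G.IsTree) {v w x y : V} (hx : G.Adj x w) (hy : G.Adj y w)
    (hxw : G.dist v w = G.dist v x + 1) (hyw : G.dist v w = G.dist v y + 1) : x = y := by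
  obtain ⟨p, hp⟩ := hT.connected.exists_walk_length_eq_dist v x
  obtain ⟨q, hq⟩ := hT.connected.exists_walk_length_eq_dist v y
  have hp' : (p.concat hx).IsPath :=
    SimpleGraph.Walk.isPath_of_length_eq_dist _ (by simp [hp, hxw])
  have hq' : (q.concat hy).IsPath :=
    SimpleGraph.Walk.isPath_of_length_eq_dist _ (by simp [hq, hyw])
  have h := (hT.existsUnique_path v w).unique hp' hq'
  simpa using congrArg SimpleGraph.Walk.penultimate h

lemma exists_parent (hG : G.Connected) {v w : V} {n : ℕ} (h : G.dist v w = n + 1) :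
    ∃ x, G.dist v x = n ∧ G.Adj x w := by
  obtain ⟨p, hp⟩ := hG.exists_walk_length_eq_dist v w
  have hnil : ¬ p.Nil := by
    rw [← SimpleGraph.Walk.length_eq_zero_iff]
    omega
  have hadj := p.adj_penultimate hnil
  refine ⟨p.penultimate, ?_, hadj⟩
  have h1 := SimpleGraph.dist_le p.dropLast
  have h2 := hG.dist_triangle (u := v) (v := p.penultimate) (w := w)
  have h3 := SimpleGraph.dist_eq_one_iff_adj.2 hadj
  have h4 : p.dropLast.length = p.length - 1 := by simp
  omega

/-- Finiteness of spheres, without which `Set.ncard` would take the junk value `0`. -/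
lemma sphere_finite [∀ v, Fintype (G.neighborSet v)] (hG : G.Connected) (v : V) (n : ℕ) :
    {w : V | G.dist v w = n}.Finite := by
  induction n with
  | zero =>
    refine (Set.finite_singleton v).subset fun w hw => ?_
    exact (hG.dist_eq_zero_iff.1 hw).symm
  | succ n ih =>
    refine (ih.biUnion fun x _ => Set.toFinite (G.neighborSet x)).subset fun w hw => ?_
    obtain ⟨x, hx, hxw⟩ := exists_parent hG hw
    exact Set.mem_biUnion hx hxw

/-- All neighbours of `x`, except possibly its parent, lie one step further from `v`. -/
lemma pred_le_card_children [∀ v, Fintype (G.neighborSet v)] (hT : G.IsTree)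
    (v x : V) :
    G.degree x - 1 ≤ ((G.neighborFinset x).filter fun w => G.dist v w = G.dist v x + 1).card := by
  have h1 : ((G.neighborFinset x).filter fun w => ¬ G.dist v w = G.dist v x + 1).card ≤ 1 := by
    refine Finset.card_le_one.2 fun a ha b hb => ?_
    simp only [Finset.mem_filter, SimpleGraph.mem_neighborFinset] at ha hb
    have ha' := hT.dist_eq_dist_add_one_of_adj v ha.1
    have hb' := hT.dist_eq_dist_add_one_of_adj v hb.1
    exact parent_unique hT ha.1.symm hb.1.symm (ha'.resolve_right ha.2) (hb'.resolve_right hb.2)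
  have h2 := Finset.card_filter_add_card_filter_not (s := G.neighborFinset x)
    (fun w => G.dist v w = G.dist v x + 1)
  rw [SimpleGraph.card_neighborFinset_eq_degree] at h2
  omega

lemma mul_sphere_le [∀ v, Fintype (G.neighborSet v)] (hT : G.IsTree) {p : ℕ}
    (hdeg : ∀ v, p ≤ G.degree v) (v : V) (n : ℕ) :
    (p - 1) * {w : V | G.dist v w = n}.ncard ≤ {w : V | G.dist v w = n + 1}.ncard := by
  classical
  have hf := sphere_finite hT.connected v
  rw [Set.ncard_eq_toFinset_card _ (hf n), Set.ncard_eq_toFinset_card _ (hf (n + 1)), mul_comm]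
  refine (Finset.card_mul_le_card_mul G.Adj (n := 1) (fun x hx => ?_) fun w hw => ?_).trans_eq
    (mul_one _)
  · have hx' : G.dist v x = n := by simpa using hx
    refine (Nat.sub_le_sub_right (hdeg x) 1).trans ((pred_le_card_children hT v x).trans ?_)
    refine Finset.card_le_card fun w hw => ?_
    simp only [Finset.mem_filter, SimpleGraph.mem_neighborFinset, hx'] at hw
    simp [Finset.bipartiteAbove, hw.1, hw.2]
  · have hw' : G.dist v w = n + 1 := by simpa using hw
    refine Finset.card_le_one.2 fun a ha b hb => ?_
    simp only [Finset.bipartiteBelow, Finset.mem_filter, Set.Finite.mem_toFinset,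
      Set.mem_ofPred_eq] at ha hb
    exact parent_unique (v := v) hT ha.2 hb.2 (by omega) (by omega)

lemma ball_succ_le (v : V) (n : ℕ) :
    {w : V | G.dist v w ≤ n + 1}.ncard ≤
      {w : V | G.dist v w ≤ n}.ncard + {w : V | G.dist v w = n + 1}.ncard := by
  have h : {w : V | G.dist v w ≤ n + 1} =
      {w : V | G.dist v w ≤ n} ∪ {w : V | G.dist v w = n + 1} := by
    ext w
    exact Nat.le_succ_iff
  rw [h]
  exact Set.ncard_union_le _ _

end TreeGrowth

open TreeGrowth

/-- In a locally finite tree all of whose vertex degrees are at least `p ≥ 3`, the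
spheres and balls around any vertex `v` satisfy `|S_n(v)| ≥ (p − 2)·|B_{n−1}(v)|`
for all `n ≥ 1`. -/
theorem stmt_11 {V : Type*} (G : SimpleGraph V) [∀ v, Fintype (G.neighborSet v)]
    (hT : G.IsTree) (p : ℕ) (hp : 3 ≤ p) (hdeg : ∀ v, p ≤ G.degree v) (v : V) :
    ∀ n : ℕ, 1 ≤ n →
      (p - 2) * {w : V | G.dist v w ≤ n - 1}.ncard ≤ {w : V | G.dist v w = n}.ncard := by
  intro n hn
  obtain ⟨n, rfl⟩ := Nat.exists_eq_add_of_le' hn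
  rw [Nat.add_sub_cancel]
  clear hn
  -- Writing `p = q + 2` removes the truncated subtractions `p - 2` and `p - 1`.
  obtain ⟨q, rfl⟩ := Nat.exists_eq_add_of_le' (show 2 ≤ p by omega)
  have key := mul_sphere_le hT hdeg v
  simp only [Nat.add_sub_cancel, show q + 2 - 1 = q + 1 by omega] at key ⊢
  induction n with
  | zero =>
    have h0 : {w : V | G.dist v w ≤ 0} = {w : V | G.dist v w = 0} := by simp
    rw [h0]
    exact (Nat.mul_le_mul_right _ q.le_succ).trans (key 0)
  | succ n ih =>
    calc q * {w : V | G.dist v w ≤ n + 1}.ncard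
        ≤ q * ({w : V | G.dist v w ≤ n}.ncard + {w : V | G.dist v w = n + 1}.ncard) :=
          Nat.mul_le_mul_left q (ball_succ_le v n)
      _ ≤ (q + 1) * {w : V | G.dist v w = n + 1}.ncard := by linarith
      _ ≤ _ := key (n + 1)
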